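/- Let n ≥ 1, α > 0, 0 < a₀ < 1, and let f_* : Γₙ⁺ → (0,∞) be homogeneous of degree one with f_*(1,…,1) = 1. Set t̃ = t + (1+α)⁻¹. Then the function v(ξ,t) = −a₀[(1+α)t̃]^{1/(1+α)}·√(1−|ξ|²) is a strict supersolution of the dual flow: ∂ₜv > −F_*(A*[v(·,t)])^{−α}·w* at every (ξ,t) ∈ B₁×(0,∞). -/

import Mathlib

open Real Filter Set

noncomputable section

/-- Partial derivative of `u` in the `i`-th coordinate direction. -/
def pd (n : ℕ) (u : (Fin n → ℝ) → ℝ) (i : Fin n) (x : Fin n → ℝ) : ℝ :=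
  fderiv ℝ u x (Pi.single i 1)

/-- Hessian matrix of `u`. -/
def hess (n : ℕ) (u : (Fin n → ℝ) → ℝ) (x : Fin n → ℝ) : Matrix (Fin n) (Fin n) ℝ :=
  Matrix.of fun i j => pd n (pd n u j) i x

/-- Squared Euclidean norm of the gradient. -/
def gradSq (n : ℕ) (u : (Fin n → ℝ) → ℝ) (x : Fin n → ℝ) : ℝ :=
  ∑ i, (pd n u i x) ^ 2

/-- `w = √(1 - |Du|²)`. -/
def wF (n : ℕ) (u : (Fin n → ℝ) → ℝ) (x : Fin n → ℝ) : ℝ :=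
  Real.sqrt (1 - gradSq n u x)

/-- `γ^{ik} = δ_{ik} + u_i u_k / (w (1 + w))`. -/
def gammaM (n : ℕ) (u : (Fin n → ℝ) → ℝ) (x : Fin n → ℝ) : Matrix (Fin n) (Fin n) ℝ :=
  Matrix.of fun i k =>
    (if i = k then (1 : ℝ) else 0) + pd n u i x * pd n u k x / (wF n u x * (1 + wF n u x))

/-- The principal-curvature matrix `A[u] = (1/w) γ (D²u) γ`. -/
def curvM (n : ℕ) (u : (Fin n → ℝ) → ℝ) (x : Fin n → ℝ) : Matrix (Fin n) (Fin n) ℝ :=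
  (wF n u x)⁻¹ • (gammaM n u x * hess n u x * gammaM n u x)

/-- The positive cone `Γₙ⁺`. -/
def GammaPlus (n : ℕ) : Set (Fin n → ℝ) := {κ | ∀ i, 0 < κ i}

/-- `F(A) = 1 / f_*(κ₁⁻¹, …, κₙ⁻¹)` where `κᵢ` are the eigenvalues of `A`. -/
def Fc (n : ℕ) (fstar : (Fin n → ℝ) → ℝ) (A : Matrix (Fin n) (Fin n) ℝ) : ℝ :=
  if h : A.IsHermitian then 1 / fstar (fun i => (h.eigenvalues i)⁻¹) else 0

/-- `F_*(A) = f_*(eigenvalues of A)`. -/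
def FsM (n : ℕ) (fstar : (Fin n → ℝ) → ℝ) (A : Matrix (Fin n) (Fin n) ℝ) : ℝ :=
  if h : A.IsHermitian then fstar h.eigenvalues else 0

/-- `w* = √(1 - |ξ|²)`. -/
def wS (n : ℕ) (ξ : Fin n → ℝ) : ℝ := Real.sqrt (1 - ∑ i, (ξ i) ^ 2)

/-- `γ*_{ik} = δ_{ik} - ξᵢ ξ_k / (1 + w*)`. -/
def gammaS (n : ℕ) (ξ : Fin n → ℝ) : Matrix (Fin n) (Fin n) ℝ :=
  Matrix.of fun i k => (if i = k then (1 : ℝ) else 0) - ξ i * ξ k / (1 + wS n ξ)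

/-- The dual curvature matrix `A*[u*] = w* γ* (D²u*) γ*`. -/
def dualCurvM (n : ℕ) (ustar : (Fin n → ℝ) → ℝ) (ξ : Fin n → ℝ) :
    Matrix (Fin n) (Fin n) ℝ :=
  wS n ξ • (gammaS n ξ * hess n ustar ξ * gammaS n ξ)

/-- Open Euclidean ball of radius `r` about the origin. -/
def ballE (n : ℕ) (r : ℝ) : Set (Fin n → ℝ) := {ξ | ∑ i, (ξ i) ^ 2 < r ^ 2}

/-- Closed Euclidean ball of radius `r` about the origin. -/
def cballE (n : ℕ) (r : ℝ) : Set (Fin n → ℝ) := {ξ | ∑ i, (ξ i) ^ 2 ≤ r ^ 2}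

/-- Euclidean sphere of radius `r` about the origin. -/
def sphereE (n : ℕ) (r : ℝ) : Set (Fin n → ℝ) := {ξ | ∑ i, (ξ i) ^ 2 = r ^ 2}

/-- The full structural conditions on the curvature function `f_*`. -/
def FullStructural (n : ℕ) (fstar : (Fin n → ℝ) → ℝ) : Prop :=
  ContDiffOn ℝ (⊤ : ℕ∞) fstar (GammaPlus n) ∧
  ConcaveOn ℝ (GammaPlus n) fstar ∧
  (∀ κ ∈ GammaPlus n, 0 < fstar κ) ∧
  (∀ κ ∈ frontier (GammaPlus n), fstar κ = 0) ∧
  (∀ κ ∈ GammaPlus n, ∀ i, 0 < fderiv ℝ fstar κ (Pi.single i 1)) ∧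
  (∀ c : ℝ, 0 < c → ∀ κ ∈ GammaPlus n, fstar (c • κ) = c * fstar κ) ∧
  (∃ ε₀ > (0 : ℝ), ∀ κ ∈ GammaPlus n,
    ε₀ * fstar κ * (∑ i, κ i) ≤ ∑ i, fderiv ℝ fstar κ (Pi.single i 1) * (κ i) ^ 2) ∧
  (∀ C > (0 : ℝ), ∀ E : Set (Fin n → ℝ), IsCompact E → E ⊆ GammaPlus n →
    ∀ i₀ : Fin n, ∃ R > (0 : ℝ), ∀ κ ∈ E, C < fstar (Function.update κ i₀ (κ i₀ + R))) ∧
  fstar (fun _ => 1) = 1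

/-- Conditions A on the initial hypersurface. -/
def ConditionsA (n : ℕ) (u₀ : (Fin n → ℝ) → ℝ) (C₀ C₁ : ℝ) : Prop :=
  ContDiff ℝ (⊤ : ℕ∞) u₀ ∧
  (∀ x, gradSq n u₀ x < 1) ∧
  (∀ x, (hess n u₀ x).PosDef) ∧
  (∀ k : ℕ, ∀ i j : Fin n, ∃ M : ℝ, ∀ x,
      ‖iteratedFDeriv ℝ k (fun y => curvM n u₀ y i j) x‖ ≤ M) ∧
  (∀ x, Real.sqrt ((∑ i, (x i) ^ 2) + C₀) < u₀ x ∧ u₀ x < Real.sqrt ((∑ i, (x i) ^ 2) + C₁))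


theorem aux_sum (n : ℕ) (ξ : Fin n → ℝ) :
    HasFDerivAt (fun η : Fin n → ℝ => 1 - ∑ i, (η i) ^ 2)
      (-∑ i, (2 * ξ i) • (ContinuousLinearMap.proj (R := ℝ) (φ := fun _ : Fin n => ℝ) i)) ξ := by
  refine (HasFDerivAt.fun_sum fun i _ => ?_).const_sub 1
  have h := (hasFDerivAt_apply (𝕜 := ℝ) i ξ).pow 2
  refine h.congr_fderiv ?_
  ext x
  simp

theorem aux_wS (n : ℕ) (ξ : Fin n → ℝ) (hξ : ξ ∈ ballE n 1) :
    HasFDerivAt (wS n)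
      (-∑ i, (ξ i / wS n ξ) • (ContinuousLinearMap.proj (R := ℝ) (φ := fun _ : Fin n => ℝ) i))
      ξ := by
  have h0 : 0 < 1 - ∑ i, (ξ i) ^ 2 := by
    simp only [ballE, mem_ofPred_eq] at hξ
    linarith
  refine ((aux_sum n ξ).sqrt h0.ne').congr_fderiv ?_
  have hw : 0 < Real.sqrt (1 - ∑ i, (ξ i) ^ 2) := Real.sqrt_pos.2 h0
  rw [smul_neg, Finset.smul_sum]
  congr 1
  refine Finset.sum_congr rfl fun i _ => ?_
  rw [smul_smul]
  congr 1
  simp only [wS]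
  field_simp

theorem aux_wS_pos (n : ℕ) (ξ : Fin n → ℝ) (hξ : ξ ∈ ballE n 1) : 0 < wS n ξ := by
  simp only [ballE, mem_ofPred_eq] at hξ
  exact Real.sqrt_pos.2 (by linarith)

theorem aux_wS_sq (n : ℕ) (ξ : Fin n → ℝ) (hξ : ξ ∈ ballE n 1) :
    wS n ξ ^ 2 = 1 - ∑ i, (ξ i) ^ 2 := by
  simp only [ballE, mem_ofPred_eq] at hξ
  exact Real.sq_sqrt (by linarith)

theorem aux_pd (n : ℕ) (c : ℝ) (j : Fin n) (ξ : Fin n → ℝ) (hξ : ξ ∈ ballE n 1) :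
    pd n (fun η => -c * wS n η) j ξ = c * (ξ j / wS n ξ) := by
  unfold pd
  rw [((aux_wS n ξ hξ).const_mul (-c)).fderiv]
  simp [Pi.single_apply]

theorem aux_open (n : ℕ) : IsOpen (ballE n 1) := by
  unfold ballE
  exact isOpen_lt (by fun_prop) (by fun_prop)

theorem aux_hess (n : ℕ) (c : ℝ) (i j : Fin n) (ξ : Fin n → ℝ) (hξ : ξ ∈ ballE n 1) :
    hess n (fun η => -c * wS n η) ξ i j
      = c * ((if i = j then 1 else 0) / wS n ξ + ξ i * ξ j / wS n ξ ^ 3) := by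
  have hw := aux_wS_pos n ξ hξ
  have he : pd n (fun η => -c * wS n η) j =ᶠ[nhds ξ] fun η => c * (η j * (wS n η)⁻¹) := by
    filter_upwards [(aux_open n).mem_nhds hξ] with η hη
    rw [aux_pd n c j η hη, div_eq_mul_inv]
  have hinv := (hasDerivAt_inv hw.ne').comp_hasFDerivAt ξ (aux_wS n ξ hξ)
  have hd := ((hasFDerivAt_apply (𝕜 := ℝ) j ξ).mul hinv).const_mul c
  simp only [hess, Matrix.of_apply]
  rw [pd, he.fderiv_eq]
  refine (congrArg (fun L => L (Pi.single i 1)) hd.fderiv).trans ?_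
  by_cases hij : i = j
  · subst hij
    simp [Pi.single_apply]
    field_simp
    try ring
  · have hji : ¬ j = i := fun h => hij h.symm
    simp [Pi.single_apply, hij, hji]
    field_simp
    simp

theorem aux_curv (n : ℕ) (c : ℝ) (ξ : Fin n → ℝ) (hξ : ξ ∈ ballE n 1) :
    dualCurvM n (fun η => -c * wS n η) ξ = c • (1 : Matrix (Fin n) (Fin n) ℝ) := by
  have hw := aux_wS_pos n ξ hξ
  have hs := aux_wS_sq n ξ hξ
  set w := wS n ξ with hwd
  let P : Matrix (Fin n) (Fin n) ℝ := Matrix.vecMulVec ξ ξ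
  have hdot : ξ ⬝ᵥ ξ = 1 - w ^ 2 := by
    rw [hs]
    simp [dotProduct, pow_two]
  have hPP : P * P = (1 - w ^ 2) • P := by
    simp only [P, Matrix.vecMulVec_mul_vecMulVec, hdot]
    ext i j
    simp [Matrix.vecMulVec_apply]
    try ring
  have hH : hess n (fun η => -c * wS n η) ξ = (c / w) • (1 : Matrix (Fin n) (Fin n) ℝ)
      + (c / w ^ 3) • P := by
    ext i j
    rw [aux_hess n c i j ξ hξ]
    simp [P, Matrix.vecMulVec_apply, Matrix.one_apply, ← hwd]
    split_ifs <;> ring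
  have hG : gammaS n ξ = 1 - (1 + w)⁻¹ • P := by
    ext i j
    simp [gammaS, P, Matrix.vecMulVec_apply, Matrix.one_apply, ← hwd]
    ring
  rw [dualCurvM, hH, hG]
  simp only [sub_mul, mul_sub, add_mul, mul_add, one_mul, mul_one, smul_mul_assoc,
    mul_smul_comm, hPP, smul_smul, ← hwd]
  have key : ∀ x y : ℝ, x = c → y = 0 → x • (1 : Matrix (Fin n) (Fin n) ℝ) + y • P = c • 1 := by
    rintro x y rfl rfl
    simp
  rw [← key (w * (c / w)) (w * (c / w ^ 3 - 2 * (c / w) * (1 + w)⁻¹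
    - 2 * (c / w ^ 3) * (1 + w)⁻¹ * (1 - w ^ 2) + (c / w) * (1 + w)⁻¹ ^ 2 * (1 - w ^ 2)
    + (c / w ^ 3) * (1 + w)⁻¹ ^ 2 * (1 - w ^ 2) ^ 2)) (by field_simp) (by field_simp; ring)]
  module

theorem aux_Fs (n : ℕ) (fstar : (Fin n → ℝ) → ℝ) (c : ℝ) (hc : 0 < c)
    (hhom : ∀ c : ℝ, 0 < c → ∀ κ ∈ GammaPlus n, fstar (c • κ) = c * fstar κ)
    (hnorm : fstar (fun _ => 1) = 1) :
    FsM n fstar (c • (1 : Matrix (Fin n) (Fin n) ℝ)) = c := by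
  have h : (c • (1 : Matrix (Fin n) (Fin n) ℝ)).IsHermitian := by
    simp [Matrix.IsHermitian, Matrix.conjTranspose_smul]
  have he : h.eigenvalues = c • (fun _ => (1 : ℝ)) := by
    funext i
    have h1 := h.mulVec_eigenvectorBasis i
    have h2 : (c - h.eigenvalues i) • h.eigenvectorBasis i = 0 := by
      ext k
      have := congrFun h1 k
      simp [Matrix.smul_mulVec] at this
      simp [sub_mul]
      rcases this with h5 | h5
      · rw [← h5, sub_self]
      · rw [h5, mul_zero, mul_zero, sub_zero]
    have h3 := h.eigenvectorBasis.orthonormal.ne_zero i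
    rcases smul_eq_zero.1 h2 with h4 | h4
    · simp
      linarith
    · exact absurd h4 h3
  rw [FsM, dif_pos h, he, hhom c hc _ (fun _ => one_pos), hnorm, mul_one]

/-- With `t̃ = t + (1+α)⁻¹` and `0 < a₀ < 1`, the function
`v(ξ,t) = −a₀[(1+α)t̃]^{1/(1+α)}√(1−|ξ|²)` is a strict supersolution of the dual flow:
`∂ₜv > −F_*(A*[v])^{−α} w*` on `B₁ × (0,∞)`. -/
theorem statement9 (n : ℕ) (hn : 1 ≤ n) (α : ℝ) (hα : 0 < α)
    (a₀ : ℝ) (ha₀ : 0 < a₀) (ha₀' : a₀ < 1)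
    (fstar : (Fin n → ℝ) → ℝ)
    (hpos : ∀ κ ∈ GammaPlus n, 0 < fstar κ)
    (hhom : ∀ c : ℝ, 0 < c → ∀ κ ∈ GammaPlus n, fstar (c • κ) = c * fstar κ)
    (hnorm : fstar (fun _ => 1) = 1)
    (v : (Fin n → ℝ) → ℝ → ℝ)
    (hv : v = fun ξ t =>
      -a₀ * (((1 + α) * (t + (1 + α)⁻¹)) ^ ((1 : ℝ) / (1 + α))) *
        Real.sqrt (1 - ∑ i, (ξ i) ^ 2)) :
    ∀ ξ ∈ ballE n 1, ∀ t : ℝ, 0 < t →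
      -(FsM n fstar (dualCurvM n (fun η => v η t) ξ)) ^ (-α) * wS n ξ
        < deriv (fun s => v ξ s) t := by
  intro ξ hξ t ht
  have hw := aux_wS_pos n ξ hξ
  have h1α : 0 < 1 + α := by linarith
  have hT : 0 < (1 + α) * (t + (1 + α)⁻¹) := by positivity
  set T := (1 + α) * (t + (1 + α)⁻¹) with hTd
  have hc : 0 < a₀ * T ^ ((1 : ℝ) / (1 + α)) := by positivity
  have hvt : (fun η => v η t) = fun η => -(a₀ * T ^ ((1 : ℝ) / (1 + α))) * wS n η := by
    funext η
    rw [hv]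
    simp [wS, hTd]
  rw [hvt, aux_curv n _ ξ hξ, aux_Fs n fstar _ hc hhom hnorm]
  have hd : HasDerivAt (fun s => v ξ s)
      (-a₀ * ((1 + α) * ((1 : ℝ) / (1 + α)) * T ^ ((1 : ℝ) / (1 + α) - 1)) * wS n ξ) t := by
    rw [hv]
    have h1 : HasDerivAt (fun s : ℝ => (1 + α) * (s + (1 + α)⁻¹)) (1 + α) t := by
      simpa using ((hasDerivAt_id t).add_const ((1 + α)⁻¹)).const_mul (1 + α)
    exact ((h1.rpow_const (Or.inl hT.ne')).const_mul (-a₀)).mul_const _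
  rw [hd.deriv, Real.mul_rpow ha₀.le (by positivity), ← Real.rpow_mul hT.le]
  have e1 : (1 : ℝ) / (1 + α) - 1 = 1 / (1 + α) * (-α) := by field_simp; ring
  have e2 : (1 + α) * ((1 : ℝ) / (1 + α)) = 1 := by field_simp
  rw [e1, e2]
  have hX : 0 < T ^ (1 / (1 + α) * (-α)) := by positivity
  have hA : a₀ < a₀ ^ (-α) :=
    ha₀'.trans (Real.one_lt_rpow_of_pos_of_lt_one_of_neg ha₀ ha₀' (by linarith))
  have := mul_lt_mul_of_pos_right hA (mul_pos hX hw)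
  linarith

end
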